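/- arXiv:cs/0701031 — 2 statements merged into one kernel-verified Lean document; each statement's English description precedes it below -/
import Mathlib

section
/- Let r be a confluent binary relation on the ground terms of a first-order language L, and let g be a family of construction functions such that for every function symbol f : L.Functions n and every tuple vs of values of g, one has r* (Term.func f vs) (g n f vs) and g n f vs is r-normal. Then g is valid with respect to the equivalence closure EqvGen r. -/
/-!
Values of `g` are normal forms of the terms they are built from, and confluence makes normal forms
unique within each class of `EqvGen r` (Church–Rosser). A value is therefore a canonical
representative of the class of the term it stands for.
-/

open FirstOrder FirstOrder.Language

variable {L : Language}

/-- The set of values of a family of construction functions `g`. -/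
inductive IsValue (g : ∀ (n : ℕ), L.Functions n → (Fin n → L.Term Empty) → L.Term Empty) :
    L.Term Empty → Prop
  | mk {n : ℕ} (f : L.Functions n) (vs : Fin n → L.Term Empty) :
      (∀ i, IsValue g (vs i)) → IsValue g (g n f vs)

/-- A family of construction functions `g` is valid with respect to `E`. -/
def ValidFamily (E : L.Term Empty → L.Term Empty → Prop)
    (g : ∀ (n : ℕ), L.Functions n → (Fin n → L.Term Empty) → L.Term Empty) : Prop :=
  (∀ (n : ℕ) (f : L.Functions n) (vs : Fin n → L.Term Empty),
      (∀ i, IsValue g (vs i)) → E (g n f vs) (Term.func f vs)) ∧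
  (∀ (n p : ℕ) (f : L.Functions n) (f' : L.Functions p)
      (vs : Fin n → L.Term Empty) (ws : Fin p → L.Term Empty),
      (∀ i, IsValue g (vs i)) → (∀ i, IsValue g (ws i)) →
      E (Term.func f vs) (Term.func f' ws) → g n f vs = g p f' ws)

section Rewriting

open Relation

variable {α : Type*} {r : α → α → Prop} {a b : α}

/-- Confluence of a rewriting relation: any two reducts of an element are joinable, that is, have a
common reduct. -/
def Confluent (r : α → α → Prop) : Prop :=
  ∀ a b c, ReflTransGen r a b → ReflTransGen r a c → Join (ReflTransGen r) b c

/-- The `r`-normal elements: those at which no rewriting step starts. -/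
def IsNormalForm (r : α → α → Prop) (a : α) : Prop :=
  ¬∃ b, r a b

theorem IsNormalForm.eq_of_reflTransGen (ha : IsNormalForm r a) (hab : ReflTransGen r a b) :
    b = a :=
  (reflTransGen_iff_eq (not_exists.mp ha)).mp hab

theorem Confluent.join_of_eqvGen (hr : Confluent r) (hab : EqvGen r a b) :
    Join (ReflTransGen r) a b :=
  have : IsEquiv α (Join (ReflTransGen r)) := (equivalence_join hr).isEquiv
  EqvGen.eqvGen_le (fun _ y hxy ↦ ⟨y, .single hxy, .refl⟩) a b hab

theorem Confluent.eq_of_eqvGen (hr : Confluent r) (ha : IsNormalForm r a) (hb : IsNormalForm r b)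
    (hab : EqvGen r a b) : a = b := by
  obtain ⟨c, hac, hbc⟩ := hr.join_of_eqvGen hab
  exact (ha.eq_of_reflTransGen hac).symm.trans (hb.eq_of_reflTransGen hbc)

end Rewriting

theorem ValidFamily.of_equivalence {E : L.Term Empty → L.Term Empty → Prop}
    {g : ∀ (n : ℕ), L.Functions n → (Fin n → L.Term Empty) → L.Term Empty} (hE : Equivalence E)
    (correct : ∀ (n : ℕ) (f : L.Functions n) (vs : Fin n → L.Term Empty),
      (∀ i, IsValue g (vs i)) → E (g n f vs) (Term.func f vs))
    (unique : ∀ u v, IsValue g u → IsValue g v → E u v → u = v) :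
    ValidFamily E g := by
  refine ⟨correct, fun n p f f' vs ws hvs hws h ↦ unique _ _ (.mk f vs hvs) (.mk f' ws hws) ?_⟩
  exact hE.trans (correct n f vs hvs) (hE.trans h (hE.symm (correct p f' ws hws)))

theorem valid_family_of_normalizing
    (r : L.Term Empty → L.Term Empty → Prop)
    (hconf : ∀ a b c, Relation.ReflTransGen r a b → Relation.ReflTransGen r a c →
        ∃ d, Relation.ReflTransGen r b d ∧ Relation.ReflTransGen r c d)
    (g : ∀ (n : ℕ), L.Functions n → (Fin n → L.Term Empty) → L.Term Empty)
    (hg : ∀ (n : ℕ) (f : L.Functions n) (vs : Fin n → L.Term Empty),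
        (∀ i, IsValue g (vs i)) →
        Relation.ReflTransGen r (Term.func f vs) (g n f vs) ∧ ¬∃ u, r (g n f vs) u) :
    ValidFamily (Relation.EqvGen r) g := by
  have hr : Confluent r := hconf
  have normal : ∀ u, IsValue g u → IsNormalForm r u := by
    rintro _ ⟨f, vs, hvs⟩
    exact (hg _ f vs hvs).2
  refine .of_equivalence (Relation.EqvGen.is_equivalence r) ?correct ?unique
  case correct =>
    intro n f vs hvs
    exact .symm _ _ (Relation.EqvGen.reflTransGen_le_eqvGen r _ _ (hg n f vs hvs).1)
  case unique =>
    intro u v hu hv huv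
    exact hr.eq_of_eqvGen (normal u hu) (normal v hv) huv
end

section
/- For all t u : FreeMagma α, acCon t u holds if and only if leaves t = leaves u as multisets over α. -/
/-!
A relation between terms of the free magma is an AC-identity exactly when it holds under every
homomorphism to a commutative semigroup. Both directions test this against one such homomorphism.
For soundness it is `leaves` itself. For completeness it is the projection onto the quotient by
`acCon`, a commutative semigroup in which the value of a term is the product over its leaves and
so depends only on their multiset.
-/

variable {α : Type*}

/-- The AC-congruence on the free magma. -/
inductive acCon : FreeMagma α → FreeMagma α → Prop
  | comm (x y : FreeMagma α) : acCon (x * y) (y * x)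
  | assoc (x y z : FreeMagma α) : acCon (x * y * z) (x * (y * z))
  | refl (t : FreeMagma α) : acCon t t
  | symm {t u : FreeMagma α} : acCon t u → acCon u t
  | trans {t u v : FreeMagma α} : acCon t u → acCon u v → acCon t v
  | mul {t t' u u' : FreeMagma α} : acCon t t' → acCon u u' → acCon (t * u) (t' * u')

/-- The multiset of leaves of a term of the free magma. -/
def leaves : FreeMagma α → Multiset α
  | FreeMagma.of a => {a}
  | FreeMagma.mul t u => leaves t + leaves u

theorem leaves_mul (t u : FreeMagma α) : leaves (t * u) = leaves t + leaves u := rfl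

/-- The map `leaves` as a magma homomorphism; `Multiplicative` turns the sum of multisets into a
product, so that `leaves` can be compared with the other homomorphisms out of the free magma. -/
def leavesHom : FreeMagma α →ₙ* Multiplicative (Multiset α) where
  toFun t := Multiplicative.ofAdd (leaves t)
  map_mul' _ _ := rfl

theorem prod_map_leaves {M : Type*} [CommMonoid M] (f : FreeMagma α →ₙ* M) (t : FreeMagma α) :
    ((leaves t).map fun a ↦ f (FreeMagma.of a)).prod = f t := by
  induction t with
  | ih1 a => simp [leaves]
  | ih2 t u iht ihu => rw [leaves_mul, Multiset.map_add, Multiset.prod_add, iht, ihu, map_mul]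

-- A semigroup may lack the empty product, so the product over the leaves is taken in `WithOne S`.
theorem map_eq_map_of_leaves_eq {S : Type*} [CommSemigroup S] (f : FreeMagma α →ₙ* S)
    {t u : FreeMagma α} (h : leaves t = leaves u) : f t = f u := by
  let g : FreeMagma α →ₙ* WithOne S := WithOne.coeMulHom.comp f
  have hg : g t = g u := by rw [← prod_map_leaves g t, h, prod_map_leaves g u]
  exact WithOne.coe_inj.mp hg

namespace acCon

theorem map_eq_map {S : Type*} [CommSemigroup S] (f : FreeMagma α →ₙ* S) {t u : FreeMagma α}
    (h : acCon t u) : f t = f u := by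
  induction h with
  | comm x y => simp only [map_mul, mul_comm]
  | assoc x y z => simp only [map_mul, mul_assoc]
  | refl t => rfl
  | symm _ ih => exact ih.symm
  | trans _ _ ih ih' => exact ih.trans ih'
  | mul _ _ ih ih' => rw [map_mul, map_mul, ih, ih']

variable (α) in
/-- The relation `acCon` as a bundled multiplicative congruence, used to form the quotient of the
free magma by it. -/
def toCon : Con (FreeMagma α) where
  r := acCon
  iseqv := ⟨refl, symm, trans⟩
  mul' := mul

instance : CommSemigroup (toCon α).Quotient where
  mul_assoc := by
    rintro ⟨x⟩ ⟨y⟩ ⟨z⟩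
    exact (toCon α).eq.mpr (assoc x y z)
  mul_comm := by
    rintro ⟨x⟩ ⟨y⟩
    exact (toCon α).eq.mpr (comm x y)

end acCon

theorem acCon_iff_leaves_eq (t u : FreeMagma α) :
    acCon t u ↔ leaves t = leaves u := by
  constructor
  · intro h
    exact Multiplicative.ofAdd.injective (h.map_eq_map leavesHom)
  · intro h
    exact (acCon.toCon α).eq.mp (map_eq_map_of_leaves_eq (acCon.toCon α).mkMulHom h)
end
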